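/- There exist positive constants C_a, C_b with the following property. Let θ ∈ (0, 1), let X₀ ∈ ℝ^{n×p} have i.i.d. BG(θ) entries, and let Ξ̃ ∈ ℝ^{n×n} be any fixed matrix with spectral norm ‖Ξ̃‖_op ≤ 1/(2n). Then with probability at least 1 − θ(np)^{−7} − exp(−0.3 θ n p), simultaneously for all w ∈ Γ: ‖∇_w g(w; X₀ + Ξ̃X₀) − ∇_w g(w; X₀)‖ ≤ C_a (n/μ) log(np) ‖Ξ̃‖_op, and ‖∇²_w g(w; X₀ + Ξ̃X₀) − ∇²_w g(w; X₀)‖_op ≤ C_b max{n^{3/2}/μ², n²/μ} log^{3/2}(np) ‖Ξ̃‖_op. -/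

import Mathlib

open MeasureTheory ProbabilityTheory Real Matrix
open scoped RealInnerProductSpace ENNReal NNReal

noncomputable section

/-- The Bernoulli–Gaussian law `BG(θ)`: with probability `θ` a standard Gaussian,
with probability `1-θ` a point mass at `0`. -/
def bg (θ : ℝ) : Measure ℝ :=
  θ.toNNReal • gaussianReal 0 1 + (1 - θ).toNNReal • Measure.dirac 0

instance bg.instIsFiniteMeasure (θ : ℝ) : IsFiniteMeasure (bg θ) := by
  unfold bg; infer_instance

/-- Law of an `n × p` matrix with i.i.d. `BG(θ)` entries. -/
def bgMatrix (θ : ℝ) (n p : ℕ) : Measure (Fin n → Fin p → ℝ) :=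
  Measure.pi fun _ => Measure.pi fun _ => bg θ

/-- Law of a vector in `ℝ^n` with i.i.d. `BG(θ)` entries. -/
def bgVec (θ : ℝ) (n : ℕ) : Measure (Fin n → ℝ) :=
  Measure.pi fun _ => bg θ

/-- The smooth sparsity surrogate `h_μ(z) = μ log cosh (z/μ)`. -/
def hmu (μ z : ℝ) : ℝ := μ * Real.log (Real.cosh (z / μ))

/-- Reparametrization `q(w) = (w, √(1-‖w‖²))` with `w` in the unit ball of `ℝ^{n-1}`. -/
def qmap (n : ℕ) (w : EuclideanSpace ℝ (Fin (n - 1))) : Fin n → ℝ :=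
  fun i => if h : (i : ℕ) < n - 1 then w ⟨i, h⟩ else Real.sqrt (1 - ‖w‖ ^ 2)

/-- `f(q; Y) = (1/p) ∑ₖ h_μ(qᵀ yₖ)`. -/
def ffun (n p : ℕ) (μ : ℝ) (Y : Matrix (Fin n) (Fin p) ℝ)
    (q : EuclideanSpace ℝ (Fin n)) : ℝ :=
  (p : ℝ)⁻¹ * ∑ k : Fin p, hmu μ (∑ i : Fin n, q i * Y i k)

/-- `g(w; Y) = f(q(w); Y)`. -/
def gfun (n p : ℕ) (μ : ℝ) (Y : Matrix (Fin n) (Fin p) ℝ)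
    (w : EuclideanSpace ℝ (Fin (n - 1))) : ℝ :=
  (p : ℝ)⁻¹ * ∑ k : Fin p, hmu μ (∑ i : Fin n, qmap n w i * Y i k)

/-- Gradient `∇g(w; Y)` in `w`. -/
def gradg (n p : ℕ) (μ : ℝ) (Y : Matrix (Fin n) (Fin p) ℝ)
    (w : EuclideanSpace ℝ (Fin (n - 1))) : EuclideanSpace ℝ (Fin (n - 1)) :=
  gradient (gfun n p μ Y) w

/-- Hessian `∇²g(w; Y)` in `w`, as a continuous linear map. -/
def hessg (n p : ℕ) (μ : ℝ) (Y : Matrix (Fin n) (Fin p) ℝ)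
    (w : EuclideanSpace ℝ (Fin (n - 1))) :
    EuclideanSpace ℝ (Fin (n - 1)) →L[ℝ] EuclideanSpace ℝ (Fin (n - 1)) :=
  fderiv ℝ (gradg n p μ Y) w

/-- The set `Γ = {w : ‖w‖ < √((4n-1)/(4n))}`. -/
def GammaSet (n : ℕ) : Set (EuclideanSpace ℝ (Fin (n - 1))) :=
  {w | ‖w‖ < Real.sqrt ((4 * (n : ℝ) - 1) / (4 * n))}

/-- Spectral (`ℓ²→ℓ²` operator) norm of а matrix. -/
def specNorm {m k : ℕ} (M : Matrix (Fin m) (Fin k) ℝ) : ℝ :=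
  ‖LinearMap.toContinuousLinearMap (Matrix.toEuclideanLin M)‖

/-- Largest magnitude of an entry of a matrix. -/
def Minf {m k : ℕ} (M : Matrix (Fin m) (Fin k) ℝ) : ℝ := ⨆ i, ⨆ j, |M i j|

/-- Condition number: ratio of largest to smallest singular value. -/
def kappa {n : ℕ} (s : Fin n → ℝ) : ℝ := (⨆ i, s i) / (⨅ i, s i)

/-- Signed standard basis vectors `{± e_i}` of `ℝ^n`. -/
def SignedBasis (n : ℕ) : Set (EuclideanSpace ℝ (Fin n)) :=
  {b | ∃ i : Fin n, b = EuclideanSpace.single i (1 : ℝ) ∨ b = -EuclideanSpace.single i (1 : ℝ)}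

/-- Set of local minimizers of `f(·; Y)` over the unit sphere `S^{n-1}`. -/
def LocalMins (n p : ℕ) (μ : ℝ) (Y : Matrix (Fin n) (Fin p) ℝ) :
    Set (EuclideanSpace ℝ (Fin n)) :=
  {q | q ∈ Metric.sphere (0 : EuclideanSpace ℝ (Fin n)) 1 ∧
       IsLocalMinOn (ffun n p μ Y) (Metric.sphere (0 : EuclideanSpace ℝ (Fin n)) 1) q}

/-- Expected objective `E_x[h_μ(q(w)ᵀ x)]` for `x` with i.i.d. `BG(θ)` entries. -/
def Gexp (n : ℕ) (θ μ : ℝ) (w : EuclideanSpace ℝ (Fin (n - 1))) : ℝ :=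
  ∫ x, hmu μ (∑ i : Fin n, qmap n w i * x i) ∂(bgVec θ n)

/-!
The proof propagates relative errors: if two factors carry relative errors `r` and `s`, a bilinear
product of them carries `(1 + r) * (1 + s) - 1`, and a Lipschitz function (`tanh` for the gradient,
its derivative for the Hessian) inherits the error of its argument. Multiplying the data by `1 + Ξ`
perturbs every entry by the relative error `‖Ξ‖`, on the scale `t ≍ √(log (n p))`, as soon as the
entries of `X` are at most `t` and those of `Ξ X` at most `‖Ξ‖ t`. On `Γ` the height
`√(1 - ‖w‖²)` is at least `1 / (2 √n)`, which bounds the first two derivatives of the chart `q` and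
yields the powers of `n`.

The entry bounds come from an exponential Markov inequality for `cosh - 1` instead of `exp`: the
atom at `0` does not contribute to `E[cosh (ξᵀ x) - 1] ≤ θ (exp (‖ξ‖² / 2) - 1)`, and this is how
the factor `θ` enters the failure probability.
-/

section Perturbation

/-- `x'` is a perturbation of `x` of relative size `r` on the scale `X`: `X` bounds `x` and `r * X`
bounds the error. Relative sizes multiply as `1 + r` under products, whatever the scales are. -/
structure IsPerturbation {E : Type*} [SeminormedAddCommGroup E] (r X : ℝ) (x x' : E) : Prop where
  size_le : ‖x‖ ≤ X
  error_le : ‖x' - x‖ ≤ r * X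

variable {E F G : Type*} [SeminormedAddCommGroup E] [SeminormedAddCommGroup F]
  [SeminormedAddCommGroup G] {r s X Y : ℝ} {x x' : E} {y y' : F}

lemma IsPerturbation.size_nonneg (hx : IsPerturbation r X x x') : 0 ≤ X :=
  (norm_nonneg x).trans hx.size_le

lemma IsPerturbation.norm_le (hx : IsPerturbation r X x x') : ‖x'‖ ≤ (1 + r) * X := by
  linarith [norm_le_norm_add_norm_sub' x' x, hx.size_le, hx.error_le]

lemma IsPerturbation.map_lipschitz {f : E → F} {K : ℝ≥0} (hx : IsPerturbation r X x x')
    (hf : LipschitzWith K f) (hf0 : f 0 = 0) : IsPerturbation r (K * X) (f x) (f x') where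
  size_le := by
    have h : ‖f x‖ ≤ K * ‖x‖ := by simpa [hf0] using hf.norm_sub_le x 0
    exact h.trans (by gcongr; exact hx.size_le)
  error_le := calc
    ‖f x' - f x‖ ≤ K * ‖x' - x‖ := hf.norm_sub_le x' x
    _ ≤ K * (r * X) := by gcongr; exact hx.error_le
    _ = r * (K * X) := by ring

variable [NormedSpace ℝ E] [NormedSpace ℝ F] [NormedSpace ℝ G]

lemma IsPerturbation.bilinear {σ : ℝ →+* ℝ} (hx : IsPerturbation r X x x')
    (hy : IsPerturbation s Y y y') (B : E →L[ℝ] F →SL[σ] G)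
    (hB : ∀ x y, ‖B x y‖ ≤ ‖x‖ * ‖y‖) :
    IsPerturbation (r + s + r * s) (X * Y) (B x y) (B x' y') where
  size_le := (hB x y).trans
    (mul_le_mul hx.size_le hy.size_le (norm_nonneg y) hx.size_nonneg)
  error_le := by
    have hsplit : B x' y' - B x y = B (x' - x) y' + B x (y' - y) := by
      simp only [map_sub, _root_.sub_apply]
      abel
    have hrX : 0 ≤ r * X := (norm_nonneg _).trans hx.error_le
    calc ‖B x' y' - B x y‖ ≤ ‖x' - x‖ * ‖y'‖ + ‖x‖ * ‖y' - y‖ := by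
          rw [hsplit]
          exact (norm_add_le _ _).trans (add_le_add (hB _ _) (hB _ _))
      _ ≤ r * X * ((1 + s) * Y) + X * (s * Y) := add_le_add
          (mul_le_mul hx.error_le hy.norm_le (norm_nonneg _) hrX)
          (mul_le_mul hx.size_le hy.error_le (norm_nonneg _) hx.size_nonneg)
      _ = (r + s + r * s) * (X * Y) := by ring

lemma IsPerturbation.smul {c c' : ℝ} (hc : IsPerturbation r X c c')
    (hy : IsPerturbation s Y y y') :
    IsPerturbation (r + s + r * s) (X * Y) (c • y) (c' • y') :=
  hc.bilinear hy (ContinuousLinearMap.lsmul ℝ ℝ) fun c y => (norm_smul c y).le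

lemma IsPerturbation.smul_const {c c' : ℝ} (hc : IsPerturbation r X c c') (y : F) :
    IsPerturbation r (X * ‖y‖) (c • y) (c' • y) where
  size_le := by
    rw [norm_smul]
    gcongr
    exact hc.size_le
  error_le := by
    rw [← sub_smul, norm_smul, ← mul_assoc]
    gcongr
    exact hc.error_le

lemma IsPerturbation.div_const {c c' d : ℝ} (hc : IsPerturbation r X c c') (hd : 0 < d) :
    IsPerturbation r (X / d) (c / d) (c' / d) := by
  simpa [div_eq_mul_inv, abs_of_pos hd] using hc.smul_const d⁻¹

lemma norm_average_sub_average_le {ι : Type*} {s : Finset ι} (hs : s.Nonempty) {x y : ι → F}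
    {ε : ℝ} (h : ∀ i, ‖x i - y i‖ ≤ ε) :
    ‖(s.card : ℝ)⁻¹ • ∑ i ∈ s, x i - (s.card : ℝ)⁻¹ • ∑ i ∈ s, y i‖ ≤ ε := by
  have hcard : (0 : ℝ) < s.card := by exact_mod_cast hs.card_pos
  rw [← smul_sub, ← Finset.sum_sub_distrib, norm_smul, Real.norm_of_nonneg (by positivity),
    inv_mul_le_iff₀ hcard]
  simpa using norm_sum_le_of_le s fun i _ => h i

lemma norm_le_sqrt_card_mul_of_forall_apply {ι : Type*} [Fintype ι] {x : EuclideanSpace ℝ ι} {t : ℝ}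
    (hx : ∀ i, ‖x i‖ ≤ t) : ‖x‖ ≤ √(Fintype.card ι) * t := by
  rcases isEmpty_or_nonempty ι with hι | ⟨⟨i⟩⟩
  · simp [EuclideanSpace.norm_eq]
  have ht : 0 ≤ t := (norm_nonneg _).trans (hx i)
  calc ‖x‖ ≤ √(∑ _i : ι, t ^ 2) := by
        rw [EuclideanSpace.norm_eq]
        gcongr with i
        exact hx i
    _ = √(Fintype.card ι) * t := by simp [Real.sqrt_sq ht]

lemma isPerturbation_of_forall_apply {ι : Type*} [Fintype ι] {x x' : EuclideanSpace ℝ ι} {t : ℝ}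
    (h : ∀ i, IsPerturbation r t (x i) (x' i)) :
    IsPerturbation r (√(Fintype.card ι) * t) x x' where
  size_le := norm_le_sqrt_card_mul_of_forall_apply fun i => (h i).size_le
  error_le := (norm_le_sqrt_card_mul_of_forall_apply fun i => (h i).error_le).trans_eq (by ring)

end Perturbation

section Tanh

lemma hasDerivAt_tanh (z : ℝ) : HasDerivAt Real.tanh (1 - Real.tanh z ^ 2) z := by
  have hcosh := (Real.cosh_pos z).ne'
  have h := (Real.hasDerivAt_sinh z).div (Real.hasDerivAt_cosh z) hcosh
  rw [funext Real.tanh_eq_sinh_div_cosh]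
  refine h.congr_deriv ?_
  field_simp

lemma abs_one_sub_tanh_sq_le_one (z : ℝ) : |1 - Real.tanh z ^ 2| ≤ 1 := by
  rw [abs_le]
  constructor <;> linarith [Real.tanh_sq_lt_one z, sq_nonneg (Real.tanh z)]

lemma lipschitzWith_tanh : LipschitzWith 1 Real.tanh :=
  lipschitzWith_of_nnnorm_deriv_le (fun z => (hasDerivAt_tanh z).differentiableAt) fun z => by
    rw [(hasDerivAt_tanh z).deriv, ← NNReal.coe_le_coe]
    exact abs_one_sub_tanh_sq_le_one z

lemma lipschitzWith_one_sub_tanh_sq : LipschitzWith 2 fun z => 1 - Real.tanh z ^ 2 := by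
  refine LipschitzWith.of_dist_le_mul fun x y => ?_
  have hsum : |Real.tanh y + Real.tanh x| ≤ 2 := by
    linarith [abs_add_le (Real.tanh y) (Real.tanh x), Real.abs_tanh_lt_one x,
      Real.abs_tanh_lt_one y]
  have htanh : |Real.tanh y - Real.tanh x| ≤ |x - y| := by
    simpa [abs_sub_comm x y] using lipschitzWith_tanh.norm_sub_le y x
  calc |1 - Real.tanh x ^ 2 - (1 - Real.tanh y ^ 2)|
      = |Real.tanh y + Real.tanh x| * |Real.tanh y - Real.tanh x| := by rw [← abs_mul]; ring_nf
    _ ≤ 2 * |x - y| := by gcongr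

lemma hasDerivAt_hmu {μ : ℝ} (hμ : μ ≠ 0) (z : ℝ) :
    HasDerivAt (hmu μ) (Real.tanh (z / μ)) z := by
  have h := (((hasDerivAt_id z).div_const μ).cosh.log (Real.cosh_pos _).ne').const_mul μ
  refine h.congr_deriv ?_
  rw [Real.tanh_eq_sinh_div_cosh]
  simp only [id]
  field_simp

lemma hasDerivAt_tanh_div (μ z : ℝ) :
    HasDerivAt (fun z => Real.tanh (z / μ)) ((1 - Real.tanh (z / μ) ^ 2) / μ) z := by
  have h := (hasDerivAt_tanh (z / μ)).comp z ((hasDerivAt_id z).div_const μ)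
  exact h.congr_deriv (by ring)

variable {r Z z z' μ : ℝ}

lemma IsPerturbation.tanh_div (hz : IsPerturbation r Z z z') (hμ : 0 < μ) :
    IsPerturbation r (Z / μ) (Real.tanh (z / μ)) (Real.tanh (z' / μ)) := by
  simpa using (hz.div_const hμ).map_lipschitz lipschitzWith_tanh Real.tanh_zero

lemma IsPerturbation.one_sub_tanh_sq_div (hz : IsPerturbation r Z z z') (hμ : 0 < μ) :
    IsPerturbation (2 * (r * (Z / μ))) (1 / μ)
      ((1 - Real.tanh (z / μ) ^ 2) / μ) ((1 - Real.tanh (z' / μ) ^ 2) / μ) := by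
  refine IsPerturbation.div_const ⟨abs_one_sub_tanh_sq_le_one _, ?_⟩ hμ
  rw [mul_one]
  refine (lipschitzWith_one_sub_tanh_sq.norm_sub_le _ _).trans ?_
  simpa using (hz.div_const hμ).error_le

end Tanh

section Hemisphere

variable {E : Type*} [NormedAddCommGroup E]

/-- The height `√(1 - ‖w‖²)` of the upper unit hemisphere above the point `w` of the unit ball. -/
def hemiHeight (w : E) : ℝ := √(1 - ‖w‖ ^ 2)

lemma hemiHeight_pos {w : E} (hw : ‖w‖ < 1) : 0 < hemiHeight w :=
  Real.sqrt_pos.2 (by nlinarith [norm_nonneg w])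

lemma hemiHeight_le_one (w : E) : hemiHeight w ≤ 1 :=
  Real.sqrt_le_one.2 (by nlinarith [norm_nonneg w])

lemma sq_hemiHeight_add_sq_norm {w : E} (hw : ‖w‖ < 1) : hemiHeight w ^ 2 + ‖w‖ ^ 2 = 1 := by
  rw [hemiHeight, Real.sq_sqrt (by nlinarith [norm_nonneg w])]
  ring

variable [InnerProductSpace ℝ E]

/-- The linear form `(a, b)` on `E × ℝ`, evaluated at the point of the hemisphere above `w`. -/
def hemiForm (a : E) (b : ℝ) (w : E) : ℝ := ⟪a, w⟫ + hemiHeight w * b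

/-- The gradient of `hemiForm a b` at `w`. -/
def hemiFormGrad (a : E) (b : ℝ) (w : E) : E := a - (b * (hemiHeight w)⁻¹) • w

/-- The negated Hessian of `hemiHeight` at `w`. -/
def hemiCurv (w : E) : E →L[ℝ] E :=
  (hemiHeight w)⁻¹ • ContinuousLinearMap.id ℝ E +
    (hemiHeight w)⁻¹ ^ 3 • InnerProductSpace.rankOne ℝ w w

/-- The Hessian at `w` of a ridge function `φ ∘ hemiForm a b`, where `τ` and `c` are the first and
second derivatives of `φ` at `hemiForm a b w`. -/
def ridgeHess (c τ : ℝ) (a : E) (b : ℝ) (w : E) : E →L[ℝ] E :=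
  c • InnerProductSpace.rankOne ℝ (hemiFormGrad a b w) (hemiFormGrad a b w) -
    (τ * b) • hemiCurv w

variable {a a' w : E} {b b' : ℝ}

lemma hasFDerivAt_hemiHeight (hw : ‖w‖ < 1) :
    HasFDerivAt hemiHeight (-(hemiHeight w)⁻¹ • innerSL ℝ w) w := by
  have hne : 1 - ‖w‖ ^ 2 ≠ 0 := by nlinarith [norm_nonneg w]
  refine ((hasStrictFDerivAt_norm_sq w).hasFDerivAt.const_sub 1).sqrt hne |>.congr_fderiv ?_
  ext u
  simp only [one_div, _root_.mul_inv_rev, smul_neg, _root_.neg_apply, _root_.smul_apply,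
    coe_innerSL_apply, nsmul_eq_mul, Nat.cast_ofNat, smul_eq_mul, hemiHeight, neg_smul, neg_inj]
  ring

lemma hasFDerivAt_hemiForm (a : E) (b : ℝ) (hw : ‖w‖ < 1) :
    HasFDerivAt (hemiForm a b) (innerSL ℝ (hemiFormGrad a b w)) w := by
  have h := (innerSL ℝ a).hasFDerivAt (x := w) |>.add ((hasFDerivAt_hemiHeight hw).mul_const b)
  refine h.congr_fderiv ?_
  ext u
  simp only [neg_smul, smul_neg, _root_.add_apply, coe_innerSL_apply, _root_.neg_apply,
    _root_.smul_apply, smul_eq_mul, hemiFormGrad, map_sub, map_smul, _root_.sub_apply]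
  ring

lemma hasFDerivAt_hemiFormGrad (a : E) (b : ℝ) (hw : ‖w‖ < 1) :
    HasFDerivAt (hemiFormGrad a b) (-(b • hemiCurv w)) w := by
  have hinv := (hasDerivAt_inv (hemiHeight_pos hw).ne').comp_hasFDerivAt w
    (hasFDerivAt_hemiHeight hw)
  have h := ((hinv.const_mul b).smul (hasFDerivAt_id w)).const_sub a
  refine h.congr_fderiv ?_
  ext u
  simp only [Function.comp_apply, neg_smul, smul_neg, smul_smul, neg_mul, neg_neg, id_eq,
    neg_add_rev, _root_.add_apply, _root_.neg_apply, ContinuousLinearMap.smulRight_apply,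
    _root_.smul_apply, coe_innerSL_apply, smul_eq_mul, ContinuousLinearMap.id_apply, hemiCurv,
    inv_pow, smul_add, InnerProductSpace.rankOne_apply, add_left_inj, neg_inj]
  module

lemma hasFDerivAt_comp_hemiForm {φ : ℝ → ℝ} {φ' : ℝ} (hw : ‖w‖ < 1)
    (hφ : HasDerivAt φ φ' (hemiForm a b w)) :
    HasFDerivAt (fun w => φ (hemiForm a b w)) (innerSL ℝ (φ' • hemiFormGrad a b w)) w :=
  (hφ.comp_hasFDerivAt w (hasFDerivAt_hemiForm a b hw)).congr_fderiv (map_smul _ _ _).symm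

lemma hasFDerivAt_smul_hemiFormGrad {ψ : ℝ → ℝ} {ψ' : ℝ} (hw : ‖w‖ < 1)
    (hψ : HasDerivAt ψ ψ' (hemiForm a b w)) :
    HasFDerivAt (fun w => ψ (hemiForm a b w) • hemiFormGrad a b w)
      (ridgeHess ψ' (ψ (hemiForm a b w)) a b w) w := by
  have h := (hψ.comp_hasFDerivAt w (hasFDerivAt_hemiForm a b hw)).smul
    (hasFDerivAt_hemiFormGrad a b hw)
  refine h.congr_fderiv ?_
  ext u
  simp only [Function.comp_apply, smul_neg, smul_smul, _root_.add_apply, _root_.neg_apply,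
    _root_.smul_apply, ContinuousLinearMap.smulRight_apply, coe_innerSL_apply, smul_eq_mul,
    ridgeHess, _root_.sub_apply, InnerProductSpace.rankOne_apply]
  module

lemma norm_hemiCurv_le (hw : ‖w‖ < 1) : ‖hemiCurv w‖ ≤ (hemiHeight w)⁻¹ ^ 3 := by
  have hpos := hemiHeight_pos hw
  calc ‖hemiCurv w‖
      ≤ (hemiHeight w)⁻¹ * ‖ContinuousLinearMap.id ℝ E‖ + (hemiHeight w)⁻¹ ^ 3 * ‖w‖ ^ 2 := by
        refine (norm_add_le _ _).trans_eq ?_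
        rw [norm_smul, norm_smul, InnerProductSpace.norm_rankOne, norm_pow, norm_inv,
          Real.norm_of_nonneg hpos.le, sq ‖w‖]
    _ ≤ (hemiHeight w)⁻¹ * 1 + (hemiHeight w)⁻¹ ^ 3 * ‖w‖ ^ 2 := by
        gcongr
        exact ContinuousLinearMap.norm_id_le
    _ = (hemiHeight w)⁻¹ ^ 3 * (hemiHeight w ^ 2 + ‖w‖ ^ 2) := by field_simp
    _ = (hemiHeight w)⁻¹ ^ 3 := by rw [sq_hemiHeight_add_sq_norm hw, mul_one]

lemma hemiForm_sub (a a' : E) (b b' : ℝ) (w : E) :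
    hemiForm a' b' w - hemiForm a b w = hemiForm (a' - a) (b' - b) w := by
  simp only [hemiForm, inner_sub_left]
  ring

lemma hemiFormGrad_sub (a a' : E) (b b' : ℝ) (w : E) :
    hemiFormGrad a' b' w - hemiFormGrad a b w = hemiFormGrad (a' - a) (b' - b) w := by
  simp only [hemiFormGrad]
  module

lemma norm_hemiForm_le (a : E) (b : ℝ) (hw : ‖w‖ < 1) : ‖hemiForm a b w‖ ≤ ‖a‖ + ‖b‖ := by
  have hheight : ‖hemiHeight w‖ ≤ 1 :=
    (Real.norm_of_nonneg (hemiHeight_pos hw).le).trans_le (hemiHeight_le_one w)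
  calc ‖hemiForm a b w‖ ≤ ‖⟪a, w⟫‖ + ‖hemiHeight w * b‖ := norm_add_le _ _
    _ ≤ ‖a‖ * ‖w‖ + ‖hemiHeight w‖ * ‖b‖ := by
        rw [norm_mul]
        gcongr
        exact norm_inner_le_norm a w
    _ ≤ ‖a‖ * 1 + 1 * ‖b‖ := by gcongr
    _ = ‖a‖ + ‖b‖ := by ring

lemma norm_hemiFormGrad_le (a : E) (b : ℝ) (hw : ‖w‖ < 1) :
    ‖hemiFormGrad a b w‖ ≤ ‖a‖ + ‖b‖ * (hemiHeight w)⁻¹ := by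
  have hpos := hemiHeight_pos hw
  calc ‖hemiFormGrad a b w‖ ≤ ‖a‖ + ‖b‖ * (hemiHeight w)⁻¹ * ‖w‖ := by
        refine (norm_sub_le _ _).trans_eq ?_
        rw [norm_smul, norm_mul, norm_inv, Real.norm_of_nonneg hpos.le]
    _ ≤ ‖a‖ + ‖b‖ * (hemiHeight w)⁻¹ * 1 := by gcongr
    _ = ‖a‖ + ‖b‖ * (hemiHeight w)⁻¹ := by rw [mul_one]

variable {r s A B C T : ℝ}

lemma IsPerturbation.hemiForm (ha : IsPerturbation s A a a') (hb : IsPerturbation s B b b')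
    (hw : ‖w‖ < 1) : IsPerturbation s (A + B) (hemiForm a b w) (hemiForm a' b' w) where
  size_le := (norm_hemiForm_le a b hw).trans (add_le_add ha.size_le hb.size_le)
  error_le := by
    rw [hemiForm_sub, mul_add]
    exact (norm_hemiForm_le _ _ hw).trans (add_le_add ha.error_le hb.error_le)

lemma IsPerturbation.hemiFormGrad (ha : IsPerturbation s A a a') (hb : IsPerturbation s B b b')
    (hw : ‖w‖ < 1) :
    IsPerturbation s (A + B * (hemiHeight w)⁻¹) (hemiFormGrad a b w) (hemiFormGrad a' b' w) := by
  have hpos := hemiHeight_pos hw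
  constructor
  · refine (norm_hemiFormGrad_le a b hw).trans ?_
    gcongr
    exacts [ha.size_le, hb.size_le]
  · rw [hemiFormGrad_sub, mul_add, ← mul_assoc]
    refine (norm_hemiFormGrad_le _ _ hw).trans ?_
    gcongr
    exacts [ha.error_le, hb.error_le]

lemma IsPerturbation.rankOne_self {v v' : E} {V : ℝ} (hv : IsPerturbation s V v v') :
    IsPerturbation (s + s + s * s) (V * V) (InnerProductSpace.rankOne ℝ v v)
      (InnerProductSpace.rankOne ℝ v' v') :=
  hv.bilinear hv (InnerProductSpace.rankOne ℝ) fun _ _ => (InnerProductSpace.norm_rankOne _ _).le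

lemma norm_ridgeHess_sub_le {c c' τ τ' ρ : ℝ} (hρ : ρ = s + s + s * s)
    (hc : IsPerturbation r C c c') (hτ : IsPerturbation s T τ τ')
    (ha : IsPerturbation s A a a') (hb : IsPerturbation s B b b') (hw : ‖w‖ < 1) :
    ‖ridgeHess c' τ' a' b' w - ridgeHess c τ a b w‖ ≤
      (r + ρ + r * ρ) * (C * (A + B * (hemiHeight w)⁻¹) ^ 2) +
        ρ * (T * B * (hemiHeight w)⁻¹ ^ 3) := by
  subst hρ
  have hrank := (hc.smul (ha.hemiFormGrad hb hw).rankOne_self).error_le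
  have hcurv := ((hτ.smul hb).smul_const (hemiCurv w)).error_le
  have hsize : 0 ≤ (s + s + s * s) * (T * B) := (norm_nonneg _).trans (hτ.smul hb).error_le
  rw [ridgeHess, ridgeHess, sub_sub_sub_comm, sq (A + _)]
  refine (norm_sub_le _ _).trans (add_le_add hrank (hcurv.trans ?_))
  linarith [mul_le_mul_of_nonneg_left (norm_hemiCurv_le hw) hsize]

end Hemisphere

section Columns

variable {m p : ℕ} {μ : ℝ} {w : EuclideanSpace ℝ (Fin (m + 1 - 1))}

/-- The `k`-th column of `Y` without its last entry. -/
def columnHead (Y : Matrix (Fin (m + 1)) (Fin p) ℝ) (k : Fin p) :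
    EuclideanSpace ℝ (Fin (m + 1 - 1)) :=
  WithLp.toLp 2 fun i : Fin m => Y i.castSucc k

lemma sum_qmap_mul (Y : Matrix (Fin (m + 1)) (Fin p) ℝ) (k : Fin p)
    (w : EuclideanSpace ℝ (Fin (m + 1 - 1))) :
    ∑ i, qmap (m + 1) w i * Y i k = hemiForm (columnHead Y k) (Y (Fin.last m) k) w := by
  have hhead : ∀ i : Fin m, qmap (m + 1) w i.castSucc = w i := fun i => by simp [qmap]
  have hlast : qmap (m + 1) w (Fin.last m) = hemiHeight w := by simp [qmap, hemiHeight]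
  simp only [Fin.sum_univ_castSucc, hhead, hlast, hemiForm, columnHead, PiLp.inner_apply]
  rfl

lemma gradg_eq_average (hμ : μ ≠ 0) (Y : Matrix (Fin (m + 1)) (Fin p) ℝ) (hw : ‖w‖ < 1) :
    gradg (m + 1) p μ Y w = (p : ℝ)⁻¹ • ∑ k,
      Real.tanh (hemiForm (columnHead Y k) (Y (Fin.last m) k) w / μ) •
        hemiFormGrad (columnHead Y k) (Y (Fin.last m) k) w := by
  refine (hasGradientAt_iff_hasFDerivAt.2 ?_).gradient
  have h := (HasFDerivAt.fun_sum (u := Finset.univ) fun k _ =>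
    hasFDerivAt_comp_hemiForm (a := columnHead Y k) (b := Y (Fin.last m) k) hw
      (hasDerivAt_hmu hμ _)).const_mul (p : ℝ)⁻¹
  refine (h.congr_of_eventuallyEq (.of_forall fun v => ?_)).congr_fderiv ?_
  · simp only [gfun, sum_qmap_mul]
  · ext u
    simp

lemma hessg_eq_average (hμ : μ ≠ 0) (Y : Matrix (Fin (m + 1)) (Fin p) ℝ) (hw : ‖w‖ < 1) :
    hessg (m + 1) p μ Y w = (p : ℝ)⁻¹ • ∑ k,
      ridgeHess ((1 - Real.tanh (hemiForm (columnHead Y k) (Y (Fin.last m) k) w / μ) ^ 2) / μ)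
        (Real.tanh (hemiForm (columnHead Y k) (Y (Fin.last m) k) w / μ))
        (columnHead Y k) (Y (Fin.last m) k) w := by
  refine HasFDerivAt.fderiv ?_
  have h := (HasFDerivAt.fun_sum (u := Finset.univ) fun k _ =>
    hasFDerivAt_smul_hemiFormGrad (a := columnHead Y k) (b := Y (Fin.last m) k) hw
      (hasDerivAt_tanh_div μ _)).const_smul (p : ℝ)⁻¹
  refine h.congr_of_eventuallyEq ?_
  filter_upwards [(isOpen_lt continuous_norm continuous_const).mem_nhds hw] with v hv
  exact gradg_eq_average hμ Y hv

variable {X Y : Matrix (Fin (m + 1)) (Fin p) ℝ} {s A B t : ℝ}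

lemma norm_gradg_sub_le [NeZero p] (hμ : 0 < μ) (hw : ‖w‖ < 1)
    (hhead : ∀ k, IsPerturbation s A (columnHead X k) (columnHead Y k))
    (hlast : ∀ k, IsPerturbation s B (X (Fin.last m) k) (Y (Fin.last m) k)) :
    ‖gradg (m + 1) p μ Y w - gradg (m + 1) p μ X w‖ ≤
      (s + s + s * s) * ((A + B) / μ * (A + B * (hemiHeight w)⁻¹)) := by
  rw [gradg_eq_average hμ.ne' X hw, gradg_eq_average hμ.ne' Y hw]
  have hterm := fun k => (((hhead k).hemiForm (hlast k) hw).tanh_div hμ |>.smul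
    ((hhead k).hemiFormGrad (hlast k) hw)).error_le
  simpa only [Finset.card_fin] using norm_average_sub_average_le Finset.univ_nonempty hterm

lemma norm_hessg_sub_le [NeZero p] {ρ : ℝ} (hρ : ρ = s + s + s * s) (hμ : 0 < μ)
    (hw : ‖w‖ < 1)
    (hhead : ∀ k, IsPerturbation s A (columnHead X k) (columnHead Y k))
    (hlast : ∀ k, IsPerturbation s B (X (Fin.last m) k) (Y (Fin.last m) k)) :
    ‖hessg (m + 1) p μ Y w - hessg (m + 1) p μ X w‖ ≤
      (2 * (s * ((A + B) / μ)) + ρ + 2 * (s * ((A + B) / μ)) * ρ) *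
          (1 / μ * (A + B * (hemiHeight w)⁻¹) ^ 2) +
        ρ * ((A + B) / μ * B * (hemiHeight w)⁻¹ ^ 3) := by
  rw [hessg_eq_average hμ.ne' X hw, hessg_eq_average hμ.ne' Y hw]
  have hform := fun k => (hhead k).hemiForm (hlast k) hw
  have hterm := fun k => norm_ridgeHess_sub_le hρ ((hform k).one_sub_tanh_sq_div hμ)
    ((hform k).tanh_div hμ) (hhead k) (hlast k) hw
  simpa only [Finset.card_fin] using norm_average_sub_average_le Finset.univ_nonempty hterm

lemma norm_lt_one_of_mem_GammaSet {n : ℕ} {w : EuclideanSpace ℝ (Fin (n - 1))} (hn : n ≠ 0)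
    (hw : w ∈ GammaSet n) : ‖w‖ < 1 := by
  have : (0 : ℝ) < n := by positivity
  refine lt_of_lt_of_le hw (Real.sqrt_le_one.2 ?_)
  rw [div_le_one (by positivity)]
  linarith

lemma inv_hemiHeight_le_of_mem_GammaSet {n : ℕ} {w : EuclideanSpace ℝ (Fin (n - 1))}
    (hn : n ≠ 0) (hw : w ∈ GammaSet n) : (hemiHeight w)⁻¹ ≤ 2 * √n := by
  have hn' : (0 : ℝ) < n := by positivity
  have hsq : ‖w‖ ^ 2 < (4 * n - 1) / (4 * n) := (Real.lt_sqrt (norm_nonneg w)).1 hw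
  refine inv_le_of_inv_le₀ (by positivity) (Real.le_sqrt_of_sq_le ?_)
  calc (2 * √n)⁻¹ ^ 2 = 1 - (4 * n - 1) / (4 * n) := by
        rw [inv_pow, mul_pow, Real.sq_sqrt hn'.le]
        field_simp
        ring
    _ ≤ 1 - ‖w‖ ^ 2 := by linarith

lemma isPerturbation_columnHead (h : ∀ i k, IsPerturbation s t (X i k) (Y i k)) (k : Fin p) :
    IsPerturbation s (√m * t) (columnHead X k) (columnHead Y k) := by
  simpa using isPerturbation_of_forall_apply (x := columnHead X k) (x' := columnHead Y k)
    fun i => h i.castSucc k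

lemma norm_gradg_sub_le_of_mem_GammaSet [NeZero p] (hμ : 0 < μ) (ht : 0 ≤ t) (hs : 0 ≤ s)
    (hw : w ∈ GammaSet (m + 1)) (h : ∀ i k, IsPerturbation s t (X i k) (Y i k)) :
    ‖gradg (m + 1) p μ Y w - gradg (m + 1) p μ X w‖ ≤
      12 * (1 + s) * ((m + 1 : ℕ) / μ) * t ^ 2 * s := by
  set ν : ℝ := √(m + 1 : ℕ)
  have hν_sq : ν ^ 2 = (m + 1 : ℕ) := Real.sq_sqrt (Nat.cast_nonneg _)
  have hν_one : 1 ≤ ν := Real.one_le_sqrt.2 (by simp)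
  have hmν : √m ≤ ν := Real.sqrt_le_sqrt (by simp)
  have hw_lt := norm_lt_one_of_mem_GammaSet m.succ_ne_zero hw
  have hheight : (hemiHeight w)⁻¹ ≤ 2 * ν := inv_hemiHeight_le_of_mem_GammaSet m.succ_ne_zero hw
  have hpos := hemiHeight_pos hw_lt
  calc ‖gradg (m + 1) p μ Y w - gradg (m + 1) p μ X w‖
      ≤ (s + s + s * s) * ((√m * t + t) / μ * (√m * t + t * (hemiHeight w)⁻¹)) :=
        norm_gradg_sub_le hμ hw_lt (isPerturbation_columnHead h) fun k => h _ k
    _ ≤ (s + s + s * s) * ((ν * t + ν * t) / μ * (ν * t + t * (2 * ν))) := by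
        gcongr
        exact le_mul_of_one_le_left ht hν_one
    _ = 6 * (2 + s) * (ν ^ 2 / μ) * t ^ 2 * s := by ring
    _ ≤ 12 * (1 + s) * (ν ^ 2 / μ) * t ^ 2 * s := by
        gcongr ?_ * (ν ^ 2 / μ) * t ^ 2 * s
        linarith
    _ = 12 * (1 + s) * ((m + 1 : ℕ) / μ) * t ^ 2 * s := by rw [hν_sq]

lemma rpow_three_halves {x : ℝ} (hx : 0 ≤ x) : x ^ ((3 : ℝ) / 2) = √x ^ 3 := by
  rw [Real.sqrt_eq_rpow, ← Real.rpow_natCast, ← Real.rpow_mul hx]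
  norm_num

lemma norm_hessg_sub_le_of_mem_GammaSet [NeZero p] (hμ : 0 < μ) (ht : 1 ≤ t) (hs : 0 ≤ s)
    (hw : w ∈ GammaSet (m + 1)) (h : ∀ i k, IsPerturbation s t (X i k) (Y i k)) :
    ‖hessg (m + 1) p μ Y w - hessg (m + 1) p μ X w‖ ≤
      86 * (1 + s) ^ 2 * max (((m + 1 : ℕ) : ℝ) ^ ((3 : ℝ) / 2) / μ ^ 2)
        (((m + 1 : ℕ) : ℝ) ^ 2 / μ) * t ^ 3 * s := by
  set ν : ℝ := √(m + 1 : ℕ) with hν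
  have hν_sq : ν ^ 2 = (m + 1 : ℕ) := Real.sq_sqrt (Nat.cast_nonneg _)
  have hν_one : 1 ≤ ν := Real.one_le_sqrt.2 (by simp)
  have hmν : √m ≤ ν := Real.sqrt_le_sqrt (by simp)
  have hw_lt := norm_lt_one_of_mem_GammaSet m.succ_ne_zero hw
  have hheight : (hemiHeight w)⁻¹ ≤ 2 * ν := inv_hemiHeight_le_of_mem_GammaSet m.succ_ne_zero hw
  have hpos := hemiHeight_pos hw_lt
  rw [rpow_three_halves (Nat.cast_nonneg _), ← hν, ← hν_sq, ← pow_mul]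
  set ρ := s + s + s * s with hρ
  set M := max (ν ^ 3 / μ ^ 2) (ν ^ (2 * 2) / μ)
  have hM_sq : ν ^ 2 / μ ≤ M := le_max_of_le_right
    (div_le_div_of_nonneg_right (pow_le_pow_right₀ hν_one (by norm_num)) hμ.le)
  have hρ_le : ρ ≤ 2 * (1 + s) ^ 2 * s := by
    rw [hρ]
    nlinarith [pow_nonneg hs 2, pow_nonneg hs 3]
  have ht_le : t ≤ ν * t := le_mul_of_one_le_left (by linarith) hν_one
  calc ‖hessg (m + 1) p μ Y w - hessg (m + 1) p μ X w‖
      ≤ (2 * (s * ((√m * t + t) / μ)) + ρ + 2 * (s * ((√m * t + t) / μ)) * ρ) *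
            (1 / μ * (√m * t + t * (hemiHeight w)⁻¹) ^ 2) +
          ρ * ((√m * t + t) / μ * t * (hemiHeight w)⁻¹ ^ 3) :=
        norm_hessg_sub_le hρ hμ hw_lt (isPerturbation_columnHead h) fun k => h _ k
    _ ≤ (2 * (s * ((ν * t + ν * t) / μ)) + ρ + 2 * (s * ((ν * t + ν * t) / μ)) * ρ) *
            (1 / μ * (ν * t + t * (2 * ν)) ^ 2) +
          ρ * ((ν * t + ν * t) / μ * t * (2 * ν) ^ 3) := by gcongr
    _ = 36 * (1 + s) ^ 2 * (ν ^ 3 / μ ^ 2) * t ^ 3 * s +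
          ρ * (9 * (ν ^ 2 / μ) + 16 * (ν ^ (2 * 2) / μ)) * t ^ 2 := by
        rw [hρ]
        field_simp
        ring
    _ ≤ 36 * (1 + s) ^ 2 * M * t ^ 3 * s + 2 * (1 + s) ^ 2 * s * (9 * M + 16 * M) * t ^ 3 := by
        gcongr
        exacts [le_max_left _ _, le_max_right _ _, by norm_num]
    _ = 86 * (1 + s) ^ 2 * M * t ^ 3 * s := by ring

end Columns

section BernoulliGaussian

variable {θ : ℝ} {n p : ℕ}

lemma isProbabilityMeasure_bg (hθ : θ ∈ Set.Icc (0 : ℝ) 1) : IsProbabilityMeasure (bg θ) := by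
  constructor
  have h : θ.toNNReal + (1 - θ).toNNReal = 1 := by
    rw [← Real.toNNReal_add hθ.1 (by linarith [hθ.2])]
    simp
  simp only [bg, Measure.add_apply, Measure.smul_apply, measure_univ, ENNReal.smul_def,
    smul_eq_mul, mul_one]
  exact_mod_cast h

lemma isProbabilityMeasure_bgVec (hθ : θ ∈ Set.Icc (0 : ℝ) 1) (n : ℕ) :
    IsProbabilityMeasure (bgVec θ n) := by
  have := isProbabilityMeasure_bg hθ
  unfold bgVec
  infer_instance

lemma isProbabilityMeasure_bgMatrix (hθ : θ ∈ Set.Icc (0 : ℝ) 1) (n p : ℕ) :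
    IsProbabilityMeasure (bgMatrix θ n p) := by
  have := isProbabilityMeasure_bg hθ
  unfold bgMatrix
  infer_instance

lemma measurePreserving_column (hθ : θ ∈ Set.Icc (0 : ℝ) 1) (k : Fin p) :
    MeasurePreserving (fun (X : Fin n → Fin p → ℝ) i => X i k) (bgMatrix θ n p) (bgVec θ n) := by
  have := isProbabilityMeasure_bg hθ
  exact measurePreserving_pi _ _ fun _ => measurePreserving_eval (fun _ : Fin p => bg θ) k

lemma integrable_exp_mul_bg (θ c : ℝ) : Integrable (fun x => Real.exp (c * x)) (bg θ) :=
  (integrable_exp_mul_gaussianReal c).smul_measure_nnreal.add_measure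
    (integrable_dirac (by simp)).smul_measure_nnreal

lemma integral_exp_mul_bg (hθ : θ ∈ Set.Icc (0 : ℝ) 1) (c : ℝ) :
    ∫ x, Real.exp (c * x) ∂(bg θ) = 1 + θ * (Real.exp (c ^ 2 / 2) - 1) := by
  have hgauss : ∫ x, Real.exp (c * x) ∂(gaussianReal 0 1) = Real.exp (c ^ 2 / 2) := by
    simpa [mgf] using congrFun (mgf_id_gaussianReal (μ := 0) (v := 1)) c
  rw [bg, integral_add_measure (integrable_exp_mul_gaussianReal c).smul_measure_nnreal
    (integrable_dirac (by simp)).smul_measure_nnreal, integral_smul_nnreal_measure,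
    integral_smul_nnreal_measure, hgauss, integral_dirac]
  simp only [NNReal.smul_def, Real.coe_toNNReal _ hθ.1,
    Real.coe_toNNReal _ (sub_nonneg.2 hθ.2), smul_eq_mul, mul_zero, Real.exp_zero]
  ring

lemma integrable_exp_dotProduct_bgVec (θ : ℝ) (ξ : Fin n → ℝ) :
    Integrable (fun x => Real.exp (ξ ⬝ᵥ x)) (bgVec θ n) := by
  simp_rw [dotProduct, Real.exp_sum]
  exact Integrable.fintype_prod fun i => integrable_exp_mul_bg θ (ξ i)

lemma prod_one_add_mul_le {ι : Type*} (S : Finset ι) (hθ : θ ∈ Set.Icc (0 : ℝ) 1) {a : ι → ℝ}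
    (ha : ∀ i, 0 ≤ a i) :
    ∏ i ∈ S, (1 + θ * a i) ≤ 1 + θ * (∏ i ∈ S, (1 + a i) - 1) := by
  classical
  obtain ⟨hθ_nonneg, hθ_le⟩ := hθ
  induction S using Finset.induction_on with
  | empty => simp
  | insert j S hj ih =>
    rw [Finset.prod_insert hj, Finset.prod_insert hj]
    have hprod : 1 ≤ ∏ i ∈ S, (1 + a i) := S.one_le_prod fun i _ => by linarith [ha i]
    set P := ∏ i ∈ S, (1 + a i)
    have hcross : 0 ≤ (1 - θ) * (θ * a j * (P - 1)) := mul_nonneg (sub_nonneg.2 hθ_le)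
      (mul_nonneg (mul_nonneg hθ_nonneg (ha j)) (sub_nonneg.2 hprod))
    calc (1 + θ * a j) * ∏ i ∈ S, (1 + θ * a i) ≤ (1 + θ * a j) * (1 + θ * (P - 1)) := by
          have := ha j
          gcongr
      _ ≤ 1 + θ * ((1 + a j) * P - 1) := by linarith

lemma integral_exp_dotProduct_bgVec_le (hθ : θ ∈ Set.Icc (0 : ℝ) 1) (ξ : Fin n → ℝ) :
    ∫ x, Real.exp (ξ ⬝ᵥ x) ∂(bgVec θ n) ≤ 1 + θ * (Real.exp (ξ ⬝ᵥ ξ / 2) - 1) := calc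
  ∫ x, Real.exp (ξ ⬝ᵥ x) ∂(bgVec θ n) = ∏ i, ∫ x, Real.exp (ξ i * x) ∂(bg θ) := by
    simp_rw [dotProduct, Real.exp_sum]
    exact integral_fintype_prod_eq_prod fun i (x : ℝ) => Real.exp (ξ i * x)
  _ = ∏ i, (1 + θ * (Real.exp (ξ i ^ 2 / 2) - 1)) := by simp_rw [integral_exp_mul_bg hθ]
  _ ≤ 1 + θ * (∏ i, (1 + (Real.exp (ξ i ^ 2 / 2) - 1)) - 1) :=
    prod_one_add_mul_le _ hθ fun i => sub_nonneg.2 (Real.one_le_exp (by positivity))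
  _ = 1 + θ * (Real.exp (ξ ⬝ᵥ ξ / 2) - 1) := by
    simp_rw [add_sub_cancel, ← Real.exp_sum, dotProduct, Finset.sum_div, sq]

lemma integrable_cosh_dotProduct_bgVec (θ : ℝ) (ξ : Fin n → ℝ) :
    Integrable (fun x => Real.cosh (ξ ⬝ᵥ x)) (bgVec θ n) := by
  simp_rw [Real.cosh_eq, ← neg_dotProduct]
  exact ((integrable_exp_dotProduct_bgVec θ ξ).add
    (integrable_exp_dotProduct_bgVec θ (-ξ))).div_const 2

lemma integral_cosh_dotProduct_bgVec_le (hθ : θ ∈ Set.Icc (0 : ℝ) 1) (ξ : Fin n → ℝ) :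
    ∫ x, Real.cosh (ξ ⬝ᵥ x) ∂(bgVec θ n) ≤ 1 + θ * (Real.exp (ξ ⬝ᵥ ξ / 2) - 1) := by
  have hpos := integral_exp_dotProduct_bgVec_le hθ ξ
  have hneg := integral_exp_dotProduct_bgVec_le hθ (-ξ)
  rw [neg_dotProduct_neg] at hneg
  simp_rw [Real.cosh_eq, ← neg_dotProduct]
  rw [integral_div, integral_add (integrable_exp_dotProduct_bgVec θ ξ)
    (integrable_exp_dotProduct_bgVec θ (-ξ))]
  linarith

lemma sq_exp_half_sub_one_le_cosh_sub_one {u : ℝ} (hu : 0 ≤ u) :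
    (Real.exp (u / 2) - 1) ^ 2 / 2 ≤ Real.cosh u - 1 := by
  have hcosh : Real.cosh u - 1 = (Real.exp (u / 2) - Real.exp (-(u / 2))) ^ 2 / 2 := by
    have hdouble := Real.cosh_two_mul (u / 2)
    have hsq := Real.cosh_sq (u / 2)
    rw [mul_div_cancel₀ u two_ne_zero] at hdouble
    rw [hdouble, hsq, Real.sinh_eq]
    ring
  have hexp : 1 ≤ Real.exp (u / 2) := Real.one_le_exp (by positivity)
  have hexp_neg : Real.exp (-(u / 2)) ≤ 1 := Real.exp_le_one_iff.2 (by linarith)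
  rw [hcosh]
  gcongr

lemma bgVec_real_sq_lt_abs_dotProduct_le (hθ : θ ∈ Set.Icc (0 : ℝ) 1) {ξ : Fin n → ℝ} {t : ℝ}
    (ht : 0 < t) (hξ : ξ ⬝ᵥ ξ ≤ t ^ 2) :
    (bgVec θ n).real {x | t ^ 2 < |ξ ⬝ᵥ x|} ≤ 2 * θ / (Real.exp (t ^ 2 / 2) - 1) := by
  have := isProbabilityMeasure_bgVec hθ n
  set z := Real.exp (t ^ 2 / 2)
  have hz : 0 < z - 1 := sub_pos.2 (Real.one_lt_exp_iff.2 (by positivity))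
  have hsubset : {x | t ^ 2 < |ξ ⬝ᵥ x|} ⊆
      {x | Real.cosh (t ^ 2) - 1 ≤ Real.cosh (ξ ⬝ᵥ x) - 1} := fun x hx => by
    have : |t ^ 2| ≤ |ξ ⬝ᵥ x| := (abs_of_nonneg (sq_nonneg t)).trans_le (le_of_lt hx)
    exact sub_le_sub_right (Real.cosh_le_cosh.2 this) 1
  have hmarkov : (Real.cosh (t ^ 2) - 1) * (bgVec θ n).real {x | t ^ 2 < |ξ ⬝ᵥ x|} ≤
      ∫ x, (Real.cosh (ξ ⬝ᵥ x) - 1) ∂(bgVec θ n) :=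
    (mul_le_mul_of_nonneg_left (measureReal_mono hsubset)
      (sub_nonneg.2 (Real.one_le_cosh _))).trans
      (mul_meas_ge_le_integral_of_nonneg (.of_forall fun x => sub_nonneg.2 (Real.one_le_cosh _))
        ((integrable_cosh_dotProduct_bgVec θ ξ).sub (integrable_const 1)) _)
  have hmean : ∫ x, (Real.cosh (ξ ⬝ᵥ x) - 1) ∂(bgVec θ n) ≤ θ * (z - 1) := by
    rw [integral_sub (integrable_cosh_dotProduct_bgVec θ ξ) (integrable_const 1)]
    have hexp : Real.exp (ξ ⬝ᵥ ξ / 2) ≤ z := Real.exp_le_exp.2 (by linarith)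
    have hcosh := integral_cosh_dotProduct_bgVec_le hθ ξ
    have := mul_le_mul_of_nonneg_left hexp hθ.1
    simp only [integral_const, probReal_univ, smul_eq_mul, mul_one]
    linarith
  rw [le_div_iff₀ hz]
  refine le_of_mul_le_mul_right ?_ hz
  set P := (bgVec θ n).real {x | t ^ 2 < |ξ ⬝ᵥ x|}
  calc P * (z - 1) * (z - 1) = 2 * ((z - 1) ^ 2 / 2 * P) := by ring
    _ ≤ 2 * ((Real.cosh (t ^ 2) - 1) * P) := by
        gcongr
        exact sq_exp_half_sub_one_le_cosh_sub_one (sq_nonneg t)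
    _ ≤ 2 * (θ * (z - 1)) := by linarith
    _ = 2 * θ * (z - 1) := by ring

lemma bgVec_real_lt_abs_dotProduct_le (hθ : θ ∈ Set.Icc (0 : ℝ) 1) (ξ : Fin n → ℝ) {t : ℝ}
    (ht : 0 < t) :
    (bgVec θ n).real {x | √(ξ ⬝ᵥ ξ) * t < |ξ ⬝ᵥ x|} ≤ 2 * θ / (Real.exp (t ^ 2 / 2) - 1) := by
  set σ := √(ξ ⬝ᵥ ξ) with hσ
  have hz : 0 < Real.exp (t ^ 2 / 2) - 1 := sub_pos.2 (Real.one_lt_exp_iff.2 (by positivity))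
  rcases eq_or_ne ξ 0 with rfl | hξ
  · have := hθ.1
    simp only [hσ, zero_dotProduct, Real.sqrt_zero, zero_mul, abs_zero, lt_self_iff_false,
      Set.ofPred_false, measureReal_empty]
    positivity
  have hξξ : 0 < ξ ⬝ᵥ ξ := (dotProduct_star_self_pos_iff (v := ξ)).2 hξ
  have hσ_pos : 0 < σ := Real.sqrt_pos.2 hξξ
  have hscaled : ((t / σ) • ξ) ⬝ᵥ ((t / σ) • ξ) = t ^ 2 := by
    rw [smul_dotProduct, dotProduct_smul, ← Real.sq_sqrt hξξ.le, ← hσ, smul_eq_mul, smul_eq_mul]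
    field_simp
  have hscale (x : Fin n → ℝ) : σ * t < |ξ ⬝ᵥ x| ↔ t ^ 2 < |((t / σ) • ξ) ⬝ᵥ x| := by
    rw [smul_dotProduct, smul_eq_mul, abs_mul, abs_of_pos (div_pos ht hσ_pos),
      div_mul_eq_mul_div, lt_div_iff₀ hσ_pos, sq, mul_assoc, mul_lt_mul_iff_right₀ ht,
      mul_comm σ]
  simp_rw [hscale]
  exact bgVec_real_sq_lt_abs_dotProduct_le hθ ht hscaled.le

lemma bgMatrix_real_exists_lt_abs_mul_apply_le {J : Type*} [Fintype J]
    (hθ : θ ∈ Set.Icc (0 : ℝ) 1) (M : Matrix J (Fin n) ℝ) {σ t : ℝ} (ht : 0 < t)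
    (hM : ∀ j, √(M j ⬝ᵥ M j) ≤ σ) :
    (bgMatrix θ n p).real {X | ∃ j k, σ * t < |(M * Matrix.of X) j k|} ≤
      Fintype.card J * p * (2 * θ / (Real.exp (t ^ 2 / 2) - 1)) := by
  have := isProbabilityMeasure_bgMatrix hθ n p
  have hentry : ∀ jk : J × Fin p, (bgMatrix θ n p).real
      {X | √(M jk.1 ⬝ᵥ M jk.1) * t < |(M * Matrix.of X) jk.1 jk.2|} ≤
        2 * θ / (Real.exp (t ^ 2 / 2) - 1) := fun jk => by
    have hmeas : MeasurableSet {x | √(M jk.1 ⬝ᵥ M jk.1) * t < |M jk.1 ⬝ᵥ x|} :=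
      measurableSet_lt measurable_const (by unfold dotProduct; fun_prop)
    have hcol := (measurePreserving_column (n := n) hθ jk.2).measureReal_preimage
      hmeas.nullMeasurableSet
    exact hcol.trans_le (bgVec_real_lt_abs_dotProduct_le hθ (M jk.1) ht)
  have hsubset : {X | ∃ j k, σ * t < |(M * Matrix.of X) j k|} ⊆ ⋃ jk : J × Fin p,
      {X : Fin n → Fin p → ℝ |
        √(M jk.1 ⬝ᵥ M jk.1) * t < |(M * Matrix.of X) jk.1 jk.2|} := by
    rintro X ⟨j, k, hjk⟩
    exact Set.mem_iUnion.2 ⟨(j, k), (mul_le_mul_of_nonneg_right (hM j) ht.le).trans_lt hjk⟩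
  calc (bgMatrix θ n p).real {X | ∃ j k, σ * t < |(M * Matrix.of X) j k|}
      ≤ ∑ jk : J × Fin p, (bgMatrix θ n p).real
          {X | √(M jk.1 ⬝ᵥ M jk.1) * t < |(M * Matrix.of X) jk.1 jk.2|} :=
        (measureReal_mono hsubset).trans (measureReal_iUnion_fintype_le _)
    _ ≤ ∑ _jk : J × Fin p, 2 * θ / (Real.exp (t ^ 2 / 2) - 1) :=
        Finset.sum_le_sum fun jk _ => hentry jk
    _ = Fintype.card J * p * (2 * θ / (Real.exp (t ^ 2 / 2) - 1)) := by simp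

end BernoulliGaussian

section HighProbability

variable {m n p : ℕ} {θ μ t : ℝ}

lemma specNorm_nonneg (M : Matrix (Fin m) (Fin n) ℝ) : 0 ≤ specNorm M :=
  norm_nonneg _

lemma sqrt_dotProduct_row_le_specNorm (M : Matrix (Fin m) (Fin n) ℝ) (i : Fin m) :
    √(M i ⬝ᵥ M i) ≤ specNorm M := by
  have hnonneg : 0 ≤ M i ⬝ᵥ M i := dotProduct_star_self_nonneg (M i)
  have hnorm : ‖WithLp.toLp 2 (M i)‖ = √(M i ⬝ᵥ M i) := by
    simp only [EuclideanSpace.norm_eq, dotProduct, Real.norm_eq_abs, abs_mul_abs_self, sq]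
  have hsq : √(M i ⬝ᵥ M i) * √(M i ⬝ᵥ M i) ≤ specNorm M * √(M i ⬝ᵥ M i) := calc
    √(M i ⬝ᵥ M i) * √(M i ⬝ᵥ M i) = |(M *ᵥ M i) i| :=
      (Real.mul_self_sqrt hnonneg).trans (abs_of_nonneg hnonneg).symm
    _ ≤ ‖WithLp.toLp 2 (M *ᵥ M i)‖ := PiLp.norm_apply_le (WithLp.toLp 2 (M *ᵥ M i)) i
    _ ≤ specNorm M * √(M i ⬝ᵥ M i) :=
      hnorm ▸ (LinearMap.toContinuousLinearMap (Matrix.toEuclideanLin M)).le_opNorm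
        (WithLp.toLp 2 (M i))
  rcases (Real.sqrt_nonneg (M i ⬝ᵥ M i)).eq_or_lt with h | h
  · exact h ▸ specNorm_nonneg M
  · exact le_of_mul_le_mul_right hsq h

lemma one_sub_le_bgMatrix_real_isPerturbation (hθ : θ ∈ Set.Icc (0 : ℝ) 1)
    (Ξ : Matrix (Fin n) (Fin n) ℝ) (ht : 0 < t) :
    1 - n * p * (4 * θ / (Real.exp (t ^ 2 / 2) - 1)) ≤
      (bgMatrix θ n p).real {X | ∀ i k,
        IsPerturbation (specNorm Ξ) t (X i k) ((Matrix.of X + Ξ * Matrix.of X) i k)} := by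
  have := isProbabilityMeasure_bgMatrix hθ n p
  set good := {X : Fin n → Fin p → ℝ | ∀ i k,
    IsPerturbation (specNorm Ξ) t (X i k) ((Matrix.of X + Ξ * Matrix.of X) i k)}
  set largeEntry := {X : Fin n → Fin p → ℝ |
    ∃ i k, 1 * t < |((1 : Matrix (Fin n) (Fin n) ℝ) * Matrix.of X) i k|}
  set largeError := {X : Fin n → Fin p → ℝ | ∃ i k, specNorm Ξ * t < |(Ξ * Matrix.of X) i k|}
  have hentry : (bgMatrix θ n p).real largeEntry ≤ _ :=
    bgMatrix_real_exists_lt_abs_mul_apply_le hθ 1 ht fun i => by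
      simp [dotProduct, Matrix.one_apply]
  have herror : (bgMatrix θ n p).real largeError ≤ _ :=
    bgMatrix_real_exists_lt_abs_mul_apply_le hθ Ξ ht (sqrt_dotProduct_row_le_specNorm Ξ)
  have hcover : Set.univ ⊆ good ∪ (largeEntry ∪ largeError) := fun X _ => by
    by_contra! hX
    simp only [Set.mem_union, not_or] at hX
    obtain ⟨hgood, hsize, herr⟩ := hX
    refine hgood fun i k => ⟨?_, ?_⟩
    · by_contra! h
      exact hsize ⟨i, k, by simpa using h⟩
    · by_contra! h
      exact herr ⟨i, k, by simpa using h⟩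
  have hunion : (1 : ℝ) ≤ (bgMatrix θ n p).real good +
      ((bgMatrix θ n p).real largeEntry + (bgMatrix θ n p).real largeError) := calc
    (1 : ℝ) = (bgMatrix θ n p).real Set.univ := probReal_univ.symm
    _ ≤ (bgMatrix θ n p).real (good ∪ (largeEntry ∪ largeError)) := measureReal_mono hcover
    _ ≤ _ := (measureReal_union_le _ _).trans
      (add_le_add_right (measureReal_union_le _ _) _)
  rw [Fintype.card_fin] at hentry herror
  have hsplit : (n : ℝ) * p * (4 * θ / (Real.exp (t ^ 2 / 2) - 1)) =
      n * p * (2 * θ / (Real.exp (t ^ 2 / 2) - 1)) +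
        n * p * (2 * θ / (Real.exp (t ^ 2 / 2) - 1)) := by ring
  linarith

lemma mul_div_exp_sub_one_le {N : ℝ} (hθ : 0 ≤ θ) (hN : 2 ≤ N) :
    N * (4 * θ / (Real.exp ((6 * √(Real.log N)) ^ 2 / 2) - 1)) ≤ θ / N ^ 7 := by
  have hlog : 0 ≤ Real.log N := Real.log_nonneg (by linarith)
  have hexp : Real.exp ((6 * √(Real.log N)) ^ 2 / 2) = N ^ 18 := by
    rw [mul_pow, Real.sq_sqrt hlog, show 6 ^ 2 * Real.log N / 2 = (18 : ℕ) * Real.log N by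
      push_cast; ring, Real.exp_nat_mul, Real.exp_log (by linarith)]
  have hpow : (5 : ℝ) ≤ N ^ 10 := by
    linarith [pow_le_pow_left₀ zero_le_two hN 10]
  have hone : 1 ≤ N ^ 8 := one_le_pow₀ (by linarith)
  have hmul : 4 * N ^ 8 + 1 ≤ N ^ 18 := by
    linarith [mul_le_mul_of_nonneg_right hpow (zero_le_one.trans hone)]
  rw [hexp, ← mul_div_assoc, div_le_div_iff₀ (by linarith) (by positivity)]
  linarith [mul_le_mul_of_nonneg_left hmul hθ]

lemma one_sub_le_bgMatrix_isPerturbation (hθ : θ ∈ Set.Icc (0 : ℝ) 1)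
    (Ξ : Matrix (Fin n) (Fin n) ℝ) (hnp : (2 : ℝ) ≤ n * p) :
    ENNReal.ofReal (1 - θ / ((n : ℝ) * p) ^ 7) ≤ bgMatrix θ n p {X | ∀ i k,
      IsPerturbation (specNorm Ξ) (6 * √(Real.log (n * p))) (X i k)
        ((Matrix.of X + Ξ * Matrix.of X) i k)} := by
  have hlog : 0 < Real.log (n * p) := Real.log_pos (by linarith)
  refine ENNReal.ofReal_le_of_le_toReal ((sub_le_sub_left ?_ 1).trans
    (one_sub_le_bgMatrix_real_isPerturbation hθ Ξ (by positivity)))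
  exact mul_div_exp_sub_one_le hθ.1 hnp

end HighProbability

section LogarithmicScale

variable {n p : ℕ} {μ : ℝ} {X Y : Matrix (Fin n) (Fin p) ℝ}
  {w : EuclideanSpace ℝ (Fin (n - 1))} {s R N : ℝ}

lemma norm_gradg_sub_le_of_isPerturbation_sqrt_log [NeZero n] [NeZero p] (hμ : 0 < μ)
    (hs : 0 ≤ s) (hsR : s ≤ R) (hN : 1 ≤ N) (hw : w ∈ GammaSet n)
    (h : ∀ i k, IsPerturbation s (6 * √(Real.log N)) (X i k) (Y i k)) :
    ‖gradg n p μ Y w - gradg n p μ X w‖ ≤ 432 * (1 + R) * (n / μ) * Real.log N * s := by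
  obtain ⟨m, rfl⟩ := Nat.exists_eq_succ_of_ne_zero (NeZero.ne n)
  have hlog : 0 ≤ Real.log N := Real.log_nonneg hN
  calc ‖gradg (m + 1) p μ Y w - gradg (m + 1) p μ X w‖
      ≤ 12 * (1 + s) * ((m + 1 : ℕ) / μ) * (6 * √(Real.log N)) ^ 2 * s :=
        norm_gradg_sub_le_of_mem_GammaSet hμ (by positivity) hs hw h
    _ = 432 * (1 + s) * ((m + 1 : ℕ) / μ) * Real.log N * s := by
        rw [mul_pow, Real.sq_sqrt hlog]
        ring
    _ ≤ 432 * (1 + R) * ((m + 1 : ℕ) / μ) * Real.log N * s := by gcongr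

lemma norm_hessg_sub_le_of_isPerturbation_sqrt_log [NeZero n] [NeZero p] (hμ : 0 < μ)
    (hs : 0 ≤ s) (hsR : s ≤ R) (hN : 2 ≤ N) (hw : w ∈ GammaSet n)
    (h : ∀ i k, IsPerturbation s (6 * √(Real.log N)) (X i k) (Y i k)) :
    ‖hessg n p μ Y w - hessg n p μ X w‖ ≤
      18576 * (1 + R) ^ 2 * max ((n : ℝ) ^ ((3 : ℝ) / 2) / μ ^ 2) ((n : ℝ) ^ 2 / μ) *
        Real.log N ^ ((3 : ℝ) / 2) * s := by
  obtain ⟨m, rfl⟩ := Nat.exists_eq_succ_of_ne_zero (NeZero.ne n)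
  have hlog : 1 / 4 ≤ Real.log N := by
    linarith [Real.log_two_gt_d9, Real.log_le_log two_pos hN]
  have hscale : 1 ≤ 6 * √(Real.log N) := by
    linarith [Real.le_sqrt_of_sq_le (show (1 / 2 : ℝ) ^ 2 ≤ Real.log N by linarith)]
  rw [rpow_three_halves (x := Real.log N) (by linarith)]
  set M := max (((m + 1 : ℕ) : ℝ) ^ ((3 : ℝ) / 2) / μ ^ 2) (((m + 1 : ℕ) : ℝ) ^ 2 / μ)
  have : 0 ≤ M := le_max_of_le_right (by positivity)
  calc ‖hessg (m + 1) p μ Y w - hessg (m + 1) p μ X w‖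
      ≤ 86 * (1 + s) ^ 2 * M * (6 * √(Real.log N)) ^ 3 * s :=
        norm_hessg_sub_le_of_mem_GammaSet hμ hscale hs hw h
    _ = 18576 * (1 + s) ^ 2 * M * √(Real.log N) ^ 3 * s := by ring
    _ ≤ 18576 * (1 + R) ^ 2 * M * √(Real.log N) ^ 3 * s := by gcongr

end LogarithmicScale

theorem statement14_general (R : ℝ≥0) :
    ∃ Ca Cb : ℝ, 0 < Ca ∧ 0 < Cb ∧
      ∀ (n p : ℕ) (θ μ : ℝ) (Ξ : Matrix (Fin n) (Fin n) ℝ),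
        0 < n → 0 < p → θ ∈ Set.Icc (0 : ℝ) 1 → 0 < μ → specNorm Ξ ≤ R →
        ENNReal.ofReal (1 - θ / ((n : ℝ) * p) ^ 7) ≤
          bgMatrix θ n p
            {X | ∀ w ∈ GammaSet n,
                 ‖gradg n p μ (Matrix.of X + Ξ * Matrix.of X) w -
                    gradg n p μ (Matrix.of X) w‖ ≤
                   Ca * ((n : ℝ) / μ) * Real.log ((n : ℝ) * p) * specNorm Ξ ∧
                 ‖hessg n p μ (Matrix.of X + Ξ * Matrix.of X) w -
                    hessg n p μ (Matrix.of X) w‖ ≤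
                   Cb * max ((n : ℝ) ^ ((3 : ℝ) / 2) / μ ^ 2) ((n : ℝ) ^ 2 / μ) *
                     Real.log ((n : ℝ) * p) ^ ((3 : ℝ) / 2) * specNorm Ξ} := by
  refine ⟨432 * (1 + R), 18576 * (1 + R) ^ 2, by positivity, by positivity,
    fun n p θ μ Ξ hn hp hθ hμ hΞ => ?_⟩
  have hs := specNorm_nonneg Ξ
  have : NeZero n := .of_pos hn
  have : NeZero p := .of_pos hp
  rcases eq_or_ne n 1 with rfl | hn_one
  · have := isProbabilityMeasure_bgMatrix hθ 1 p
    have : Subsingleton (EuclideanSpace ℝ (Fin (1 - 1))) :=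
      inferInstanceAs (Subsingleton (EuclideanSpace ℝ (Fin 0)))
    have hlog : 0 ≤ Real.log ((1 : ℕ) * p) := Real.log_nonneg (mod_cast Nat.mul_pos hn hp)
    refine (ENNReal.ofReal_le_one.2 (sub_le_self 1 (div_nonneg hθ.1 (by positivity)))).trans
      ((measure_univ (μ := bgMatrix θ 1 p)).symm.trans_le (measure_mono fun X _ w _ => ⟨?_, ?_⟩))
    all_goals exact (norm_of_subsingleton _).trans_le (by positivity)
  · have hnp : (2 : ℝ) ≤ n * p := mod_cast Nat.mul_le_mul (show 2 ≤ n by lia) hp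
    refine (one_sub_le_bgMatrix_isPerturbation hθ Ξ hnp).trans
      (measure_mono fun X hX w hw => ⟨?_, ?_⟩)
    · exact norm_gradg_sub_le_of_isPerturbation_sqrt_log hμ hs hΞ (by linarith) hw hX
    · exact norm_hessg_sub_le_of_isPerturbation_sqrt_log hμ hs hΞ hnp hw hX

/-- Lemma: perturbation bounds for gradient and Hessian under
a small multiplicative perturbation of the data. -/
theorem statement14 :
    ∃ Ca Cb : ℝ, 0 < Ca ∧ 0 < Cb ∧
      ∀ (n p : ℕ) (θ μ : ℝ) (Ξ : Matrix (Fin n) (Fin n) ℝ),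
        θ ∈ Set.Ioo (0 : ℝ) 1 → 0 < μ → specNorm Ξ ≤ 1 / (2 * n) →
        ENNReal.ofReal
            (1 - θ / ((n : ℝ) * p) ^ 7 - Real.exp (-(0.3 * θ * n * p))) ≤
          bgMatrix θ n p
            {X | ∀ w ∈ GammaSet n,
                 ‖gradg n p μ (Matrix.of X + Ξ * Matrix.of X) w -
                    gradg n p μ (Matrix.of X) w‖ ≤
                   Ca * ((n : ℝ) / μ) * Real.log ((n : ℝ) * p) * specNorm Ξ ∧
                 ‖hessg n p μ (Matrix.of X + Ξ * Matrix.of X) w -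
                    hessg n p μ (Matrix.of X) w‖ ≤
                   Cb * max ((n : ℝ) ^ ((3 : ℝ) / 2) / μ ^ 2) ((n : ℝ) ^ 2 / μ) *
                     Real.log ((n : ℝ) * p) ^ ((3 : ℝ) / 2) * specNorm Ξ} := by
  obtain ⟨Ca, Cb, hCa, hCb, hbound⟩ := statement14_general 1
  refine ⟨Ca, Cb, hCa, hCb, fun n p θ μ Ξ hθ hμ hΞ => ?_⟩
  rcases n.eq_zero_or_pos with rfl | hn
  · simp
  rcases p.eq_zero_or_pos with rfl | hp
  · simp
  have hΞ_one : specNorm Ξ ≤ 1 := hΞ.trans <| (div_le_one (by positivity)).2 <| by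
    linarith [show (1 : ℝ) ≤ n from mod_cast hn]
  exact (ENNReal.ofReal_le_ofReal (sub_le_self _ (Real.exp_pos _).le)).trans
    (hbound n p θ μ Ξ hn hp (Set.Ioo_subset_Icc_self hθ) hμ hΞ_one)

end
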